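/- Let u, v be information structures and let garblings q₁, q₂ ∈ 𝒬 attain the minimum of ‖q₁.u − v.q₂‖ (which equals sup_{g∈𝒢}(val(v,g) − val(u,g))). For any payoff function g ∈ 𝒢: if σ is an optimal behavior strategy of player 1 in Γ(v,g), then σ.q₁, defined by (σ.q₁)(c) = Σ_{c'} q₁(c)({c'})·σ(c'), is 2d(u,v)-optimal for player 1 in Γ(u,g); and if τ is optimal for player 2 in Γ(u,g), then τ.q₂ is 2d(u,v)-optimal for player 2 in Γ(v,g). (A strategy σ of player 1 is ε-optimal in Γ(u,g) if against every strategy τ of player 2 its expected payoff is at least val(u,g) − ε, and symmetrically for player 2.) -/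

import Mathlib

open scoped BigOperators ENNReal

namespace ValueDistance

/-- An information structure: a probability distribution on `K × ℕ × ℕ`
(state, signal of player 1, signal of player 2). -/
abbrev InfoStruct (K : Type) := PMF (K × ℕ × ℕ)

/-- A behavior strategy / garbling : a map `ℕ → Δ(ℕ)`. -/
abbrev Garbling : Type := ℕ → PMF ℕ

variable {K : Type}

/-- `g` is a payoff function with action bound `L` : values in `[-1,1]`,
`g k i j = -1` when `i ≥ L`, and `g k i j = 1` when `i < L` and `j ≥ L`. -/
def IsPayoffL (L : ℕ) (g : K → ℕ → ℕ → ℝ) : Prop :=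
  (∀ k i j, g k i j ∈ Set.Icc (-1 : ℝ) 1) ∧
  (∀ k i j, L ≤ i → g k i j = -1) ∧
  (∀ k i j, i < L → L ≤ j → g k i j = 1)

/-- `g` belongs to the set `𝒢` of payoff functions. -/
def IsPayoff (g : K → ℕ → ℕ → ℝ) : Prop := ∃ L, IsPayoffL L g

/-- `g` belongs to the set `𝒢₁` of single-agent (player 1) problems. -/
def IsPayoff1 (g : K → ℕ → ℕ → ℝ) : Prop :=
  IsPayoff g ∧ ∀ k i j j', g k i j = g k i j'

/-- Expected payoff in the Bayesian game `Γ(u,g)` when player 1 uses the behavior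
strategy `σ` and player 2 uses `τ`. -/
noncomputable def payoff (u : InfoStruct K) (g : K → ℕ → ℕ → ℝ)
    (σ τ : Garbling) : ℝ :=
  ∑' (x : K × ℕ × ℕ) (i : ℕ) (j : ℕ),
    (u x).toReal * (σ x.2.1 i).toReal * (τ x.2.2 j).toReal * g x.1 i j

/-- The value `val(u,g)` of the zero-sum Bayesian game `Γ(u,g)`
(the common value of `sup inf` and `inf sup` of the expected payoff;
we take `sup inf` as the definition). -/
noncomputable def val (u : InfoStruct K) (g : K → ℕ → ℕ → ℝ) : ℝ :=
  ⨆ σ : Garbling, ⨅ τ : Garbling, payoff u g σ τ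

/-- Total variation distance `‖u − v‖`. -/
noncomputable def tv {α : Type} (u v : PMF α) : ℝ :=
  ∑' x : α, |(u x).toReal - (v x).toReal|

/-- `q.u` : player 1's signal garbled through `q`. -/
noncomputable def garbleLeft (q : Garbling) (u : InfoStruct K) : InfoStruct K :=
  u.bind (fun x => (q x.2.1).map (fun c => (x.1, c, x.2.2)))

/-- `u.q` : player 2's signal garbled through `q`. -/
noncomputable def garbleRight (u : InfoStruct K) (q : Garbling) : InfoStruct K :=
  u.bind (fun x => (q x.2.2).map (fun d => (x.1, x.2.1, d)))

/-- The value-based distance `d(u,v) = sup_{g ∈ 𝒢} |val(u,g) − val(v,g)|`. -/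
noncomputable def dVal (u v : InfoStruct K) : ℝ :=
  ⨆ g : {g : K → ℕ → ℕ → ℝ // IsPayoff g}, |val u g.1 - val v g.1|

/-- The single-agent distance `d₁(u,v) = sup_{g ∈ 𝒢₁} |val(u,g) − val(v,g)|`. -/
noncomputable def d1 (u v : InfoStruct K) : ℝ :=
  ⨆ g : {g : K → ℕ → ℕ → ℝ // IsPayoff1 g}, |val u g.1 - val v g.1|

/-- Marginal of an information structure on `K × ℕ` (state, player 1's signal). -/
noncomputable def marg1 (u : InfoStruct K) : PMF (K × ℕ) :=
  u.map (fun x => (x.1, x.2.1))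

/-- Garbling of a single-agent information structure:
`(q.w)(k,c) = Σ_s w(k,s)·q(s)({c})`. -/
noncomputable def garble1 (q : Garbling) (w : PMF (K × ℕ)) : PMF (K × ℕ) :=
  w.bind (fun x => (q x.2).map (fun c => (x.1, c)))

/-- Marginal of an information structure on the states. -/
noncomputable def margK (u : InfoStruct K) : PMF K := u.map Prod.fst

/-- Marginal of an information structure on `K × ℕ` (state, player 2's signal). -/
noncomputable def margKD (u : InfoStruct K) : PMF (K × ℕ) :=
  u.map (fun x => (x.1, x.2.2))

/-- `σ.q` : on signal `c`, draw `c'` according to `q(c)` and play `σ(c')`. -/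
noncomputable def compGarble (σ q : Garbling) : Garbling :=
  fun c => (q c).bind σ

/-- `u ∈ 𝒰(L)` : both players' signals are `< L` with probability 1. -/
def InU (L : ℕ) (u : InfoStruct K) : Prop :=
  ∀ x : K × ℕ × ℕ, u x ≠ 0 → x.2.1 < L ∧ x.2.2 < L

/-- `q ∈ 𝒬(L)` : garbling with values supported on `{0,…,L−1}`. -/
def GarblingIn (L : ℕ) (q : Garbling) : Prop :=
  ∀ n m, q n m ≠ 0 → m < L

/-- The two players' signals are conditionally independent given the state:
`u(k)·u(k,c,d) = u(k,c)·u(k,d)` for all `k, c, d`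
(equivalently `u(c,d|k) = u(c|k)·u(d|k)` whenever `u(k) > 0`). -/
def CondIndep (u : InfoStruct K) : Prop :=
  ∀ (k : K) (c d : ℕ),
    (∑' y : ℕ × ℕ, u (k, y)) * u (k, c, d)
      = (∑' d' : ℕ, u (k, c, d')) * (∑' c' : ℕ, u (k, c', d))

end ValueDistance

namespace ValueDistance

/-- Expectation of `F` under `p`. -/
noncomputable def ex {α : Type} (p : PMF α) (F : α → ℝ) : ℝ := ∑' a, (p a).toReal * F a

theorem pmf_summable {α : Type} (p : PMF α) : Summable (fun a => (p a).toReal) :=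
  ENNReal.summable_toReal (by rw [p.tsum_coe]; simp)

theorem pmf_tsum {α : Type} (p : PMF α) : ∑' a, (p a).toReal = 1 := by
  rw [← ENNReal.tsum_toReal_eq (fun a => p.apply_ne_top a), p.tsum_coe]; simp

theorem ex_summable {α : Type} (p : PMF α) {F : α → ℝ} {B : ℝ} (hF : ∀ a, |F a| ≤ B) :
    Summable (fun a => (p a).toReal * F a) := by
  refine Summable.of_norm_bounded ((pmf_summable p).mul_right B) (fun a => ?_)
  rw [Real.norm_eq_abs, abs_mul, abs_of_nonneg ENNReal.toReal_nonneg]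
  exact mul_le_mul_of_nonneg_left (hF a) ENNReal.toReal_nonneg

theorem ex_abs_le {α : Type} (p : PMF α) {F : α → ℝ} {B : ℝ} (hF : ∀ a, |F a| ≤ B) :
    |ex p F| ≤ B := by
  have h : ‖∑' a, (p a).toReal * F a‖ ≤ 1 * B := by
    refine tsum_of_norm_bounded (g := fun a => (p a).toReal * B) ?_ (fun a => ?_)
    · have := (pmf_summable p).hasSum
      rw [pmf_tsum] at this
      exact this.mul_right B
    · rw [Real.norm_eq_abs, abs_mul, abs_of_nonneg ENNReal.toReal_nonneg]
      exact mul_le_mul_of_nonneg_left (hF a) ENNReal.toReal_nonneg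
  simpa [ex] using h

theorem ex_lin {α : Type} (p : PMF α) {F G : α → ℝ} (a b : ℝ) {B B' : ℝ} (hF : ∀ x, |F x| ≤ B)
    (hG : ∀ x, |G x| ≤ B') :
    ex p (fun x => a * F x + b * G x) = a * ex p F + b * ex p G := by
  unfold ex
  rw [← tsum_mul_left, ← tsum_mul_left,
    ← ((ex_summable p hF).mul_left a).tsum_add ((ex_summable p hG).mul_left b)]
  exact tsum_congr fun x => by ring

theorem ex_bind {α β : Type} (p : PMF α) (f : α → PMF β) {F : β → ℝ} {B : ℝ}
    (hF : ∀ a, |F a| ≤ B) :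
    ex (p.bind f) F = ex p (fun a => ex (f a) F) := by
  unfold ex
  have h1 : ∀ b, ((p.bind f) b).toReal * F b
      = ∑' a, (p a).toReal * (f a b).toReal * F b := by
    intro b
    rw [tsum_mul_right, PMF.bind_apply, ENNReal.tsum_toReal_eq]
    · simp
    · intro a; exact ENNReal.mul_ne_top (p.apply_ne_top a) ((f a).apply_ne_top b)
  have h2 : ∀ a, (p a).toReal * ∑' b, (f a b).toReal * F b
      = ∑' b, (p a).toReal * (f a b).toReal * F b := by
    intro a
    rw [← tsum_mul_left]
    exact tsum_congr fun x => by ring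
  simp_rw [h1, h2]
  refine Summable.tsum_comm (f := fun a b => (p a).toReal * (f a b).toReal * F b) ?_
  have hs : Summable (fun x : α × β => (p x.1).toReal * (f x.1 x.2).toReal) := by
    refine (summable_prod_of_nonneg (f := fun x : α × β => (p x.1).toReal * (f x.1 x.2).toReal)
      (fun x => mul_nonneg ENNReal.toReal_nonneg ENNReal.toReal_nonneg)).2 ?_
    refine ⟨fun a => ?_, ?_⟩
    · have := (pmf_summable (f a)).mul_left (p a).toReal
      simpa only using this
    simp only [tsum_mul_left, pmf_tsum, mul_one]
    exact pmf_summable p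
  refine Summable.of_norm_bounded (hs.mul_right B) (fun x => ?_)
  simp only [Function.uncurry]
  have h0 : 0 ≤ (p x.1).toReal * (f x.1 x.2).toReal :=
    mul_nonneg ENNReal.toReal_nonneg ENNReal.toReal_nonneg
  rw [Real.norm_eq_abs, abs_mul, abs_of_nonneg h0]
  exact mul_le_mul_of_nonneg_left (hF _) h0

theorem ex_pure {α : Type} (a : α) (F : α → ℝ) : ex (PMF.pure a) F = F a := by
  unfold ex
  rw [tsum_eq_single a]
  · simp
  · intro b hb; simp [PMF.pure_apply, hb]

theorem ex_map {α β : Type} (p : PMF α) (f : α → β) {F : β → ℝ} {B : ℝ}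
    (hF : ∀ a, |F a| ≤ B) : ex (p.map f) F = ex p (fun a => F (f a)) := by
  rw [← PMF.bind_pure_comp, ex_bind p _ hF]
  simp [ex_pure]

theorem ex_comm {α β : Type} (p : PMF α) (q : PMF β) {F : α → β → ℝ} {B : ℝ}
    (hF : ∀ a b, |F a b| ≤ B) :
    ex p (fun a => ex q (F a)) = ex q (fun b => ex p (fun a => F a b)) := by
  have h := congrArg (fun r => ex r (fun x : α × β => F x.1 x.2))
    (PMF.bind_comm p q (fun a b => PMF.pure (a, b)))
  have hF' : ∀ x : α × β, |F x.1 x.2| ≤ B := fun x => hF _ _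
  simpa only [ex_bind _ _ hF', ex_pure] using h

variable {K : Type}

theorem payoff_eq (u : InfoStruct K) (g : K → ℕ → ℕ → ℝ) (σ τ : Garbling) :
    payoff u g σ τ = ex u (fun x => ex (σ x.2.1) (fun i => ex (τ x.2.2) (fun j => g x.1 i j))) := by
  unfold payoff ex
  simp only [mul_assoc, tsum_mul_left]

theorem ex_garbleLeft (q : Garbling) (u : InfoStruct K) {F : K × ℕ × ℕ → ℝ} {B : ℝ}
    (hF : ∀ x, |F x| ≤ B) :
    ex (garbleLeft q u) F = ex u (fun x => ex (q x.2.1) (fun c => F (x.1, c, x.2.2))) := by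
  unfold garbleLeft
  rw [ex_bind _ _ hF]
  simp only [ex_map _ _ hF]

theorem ex_garbleRight (q : Garbling) (u : InfoStruct K) {F : K × ℕ × ℕ → ℝ} {B : ℝ}
    (hF : ∀ x, |F x| ≤ B) :
    ex (garbleRight u q) F = ex u (fun x => ex (q x.2.2) (fun c => F (x.1, x.2.1, c))) := by
  unfold garbleRight
  rw [ex_bind _ _ hF]
  simp only [ex_map _ _ hF]

theorem payoff_left (u : InfoStruct K) {g : K → ℕ → ℕ → ℝ} (hg : ∀ k i j, |g k i j| ≤ 1)
    (q σ τ : Garbling) : payoff u g (compGarble σ q) τ = payoff (garbleLeft q u) g σ τ := by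
  rw [payoff_eq, payoff_eq, ex_garbleLeft (B := 1)]
  · congr 1; funext x
    unfold compGarble
    rw [ex_bind (B := 1)]
    exact fun i => ex_abs_le _ fun j => hg _ _ _
  · exact fun x => ex_abs_le _ fun i => ex_abs_le _ fun j => hg _ _ _

theorem payoff_right (u : InfoStruct K) {g : K → ℕ → ℕ → ℝ} (hg : ∀ k i j, |g k i j| ≤ 1)
    (q σ τ : Garbling) : payoff u g σ (compGarble τ q) = payoff (garbleRight u q) g σ τ := by
  rw [payoff_eq, payoff_eq, ex_garbleRight (B := 1)]
  · congr 1; funext x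
    refine Eq.trans ?_ (ex_comm (B := 1) (σ x.2.1) (q x.2.2)
      (F := fun i c => ex (τ c) (fun j => g x.1 i j)) ?_)
    · congr 1; funext i
      unfold compGarble
      rw [ex_bind (B := 1)]
      exact fun j => hg _ _ _
    · exact fun i c => ex_abs_le _ fun j => hg _ _ _
  · exact fun x => ex_abs_le _ fun i => ex_abs_le _ fun j => hg _ _ _

theorem payoff_pure (u : InfoStruct K) (g : K → ℕ → ℕ → ℝ) :
    payoff u g PMF.pure PMF.pure = ex u (fun x => g x.1 x.2.1 x.2.2) := by
  rw [payoff_eq]; simp only [ex_pure]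

theorem compGarble_pure (q : Garbling) : compGarble PMF.pure q = q := by
  funext c; simp [compGarble]

theorem payoff_pure_left (u : InfoStruct K) {g : K → ℕ → ℕ → ℝ} (hg : ∀ k i j, |g k i j| ≤ 1)
    (q : Garbling) :
    payoff u g PMF.pure q = ex (garbleRight u q) (fun x => g x.1 x.2.1 x.2.2) := by
  rw [← payoff_pure, ← payoff_right u hg, compGarble_pure]

theorem payoff_pure_right (u : InfoStruct K) {g : K → ℕ → ℕ → ℝ} (hg : ∀ k i j, |g k i j| ≤ 1)
    (q : Garbling) :
    payoff u g q PMF.pure = ex (garbleLeft q u) (fun x => g x.1 x.2.1 x.2.2) := by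
  rw [← payoff_pure, ← payoff_left u hg, compGarble_pure]

theorem payoff_abs_le (u : InfoStruct K) {g : K → ℕ → ℕ → ℝ} (hg : ∀ k i j, |g k i j| ≤ 1)
    (σ τ : Garbling) : |payoff u g σ τ| ≤ 1 := by
  rw [payoff_eq]
  exact ex_abs_le _ fun x => ex_abs_le _ fun i => ex_abs_le _ fun j => hg _ _ _

theorem tv_summable {α : Type} (p r : PMF α) :
    Summable (fun x => |(p x).toReal - (r x).toReal|) :=
  ((pmf_summable p).sub (pmf_summable r)).abs

theorem ex_sub_le_tv {α : Type} (p r : PMF α) {F : α → ℝ} (hF : ∀ x, |F x| ≤ 1) :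
    ex p F - ex r F ≤ tv p r := by
  unfold ex tv
  rw [← (ex_summable p hF).tsum_sub (ex_summable r hF)]
  refine Summable.tsum_le_tsum (fun x => ?_) ((ex_summable p hF).sub (ex_summable r hF))
    (tv_summable p r)
  rw [← sub_mul]
  refine (le_abs_self _).trans ?_
  rw [abs_mul]
  exact mul_le_of_le_one_right (abs_nonneg _) (hF x)

theorem IsPayoffL.abs_le {L : ℕ} {g : K → ℕ → ℕ → ℝ} (h : IsPayoffL L g) (k : K) (i j : ℕ) :
    |g k i j| ≤ 1 := _root_.abs_le.2 (h.1 k i j)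

theorem IsPayoff.abs_le {g : K → ℕ → ℕ → ℝ} (h : IsPayoff g) (k : K) (i j : ℕ) :
    |g k i j| ≤ 1 := by obtain ⟨L, hL⟩ := h; exact hL.abs_le k i j

theorem val_ge (u : InfoStruct K) {g : K → ℕ → ℕ → ℝ} (hg : ∀ k i j, |g k i j| ≤ 1)
    (σ : Garbling) (m : ℝ) (h : ∀ τ, m ≤ payoff u g σ τ) : m ≤ val u g := by
  have : Nonempty Garbling := ⟨PMF.pure⟩
  unfold val
  refine (le_ciInf h).trans (le_ciSup (f := fun σ => ⨅ τ, payoff u g σ τ) ?_ σ)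
  refine ⟨1, ?_⟩
  rintro _ ⟨σ, rfl⟩
  refine (ciInf_le ⟨-1, ?_⟩ PMF.pure).trans (_root_.abs_le.1 (payoff_abs_le u hg σ PMF.pure)).2
  rintro _ ⟨τ, rfl⟩
  exact (_root_.abs_le.1 (payoff_abs_le u hg σ τ)).1

theorem val_le (u : InfoStruct K) {g : K → ℕ → ℕ → ℝ} (hg : ∀ k i j, |g k i j| ≤ 1)
    (τ : Garbling) (m : ℝ) (h : ∀ σ, payoff u g σ τ ≤ m) : val u g ≤ m := by
  have : Nonempty Garbling := ⟨PMF.pure⟩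
  unfold val
  refine ciSup_le fun σ => (ciInf_le ⟨-1, ?_⟩ τ).trans (h σ)
  rintro _ ⟨τ, rfl⟩
  exact (_root_.abs_le.1 (payoff_abs_le u hg σ τ)).1

theorem val_abs_le (u : InfoStruct K) {g : K → ℕ → ℕ → ℝ} (hg : ∀ k i j, |g k i j| ≤ 1) :
    |val u g| ≤ 1 :=
  _root_.abs_le.2 ⟨val_ge u hg PMF.pure _ fun τ => (_root_.abs_le.1 (payoff_abs_le u hg _ τ)).1,
    val_le u hg PMF.pure _ fun τ => (_root_.abs_le.1 (payoff_abs_le u hg τ _)).2⟩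

theorem le_dVal (u v : InfoStruct K) {g : K → ℕ → ℕ → ℝ} (hg : IsPayoff g) :
    |val u g - val v g| ≤ dVal u v := by
  unfold dVal
  refine le_ciSup (f := fun g : {g : K → ℕ → ℕ → ℝ // IsPayoff g} => |val u g.1 - val v g.1|)
    ⟨2, ?_⟩ ⟨g, hg⟩
  rintro _ ⟨g, rfl⟩
  refine (abs_sub _ _).trans ?_
  have h1 := val_abs_le u g.2.abs_le
  have h2 := val_abs_le v g.2.abs_le
  linarith

theorem minimax_aux {E : Type} [TopologicalSpace E] [AddCommGroup E] [Module ℝ E]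
    [IsTopologicalAddGroup E] [ContinuousSMul ℝ E] {G : Set E} (neG : G.Nonempty)
    (cG : Convex ℝ G) (kG : IsCompact G) {C : Set (E → ℝ)} (cC : Convex ℝ C)
    (hcont : ∀ y ∈ C, ContinuousOn y G) (hconc : ∀ y ∈ C, ConcaveOn ℝ G y) (m : ℝ)
    (h : ∀ y ∈ C, ∃ g ∈ G, m ≤ y g) : ∃ g ∈ G, ∀ y ∈ C, m ≤ y g := by
  by_contra! hcon
  choose! y hyC hy using hcon
  -- finite subcover
  obtain ⟨t, htG, ht⟩ : ∃ t : Finset E, (∀ x ∈ t, x ∈ G) ∧ ∀ g ∈ G, ∃ x ∈ t, y x g < m := by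
    obtain ⟨t, htG, ht⟩ := kG.elim_nhdsWithin_subcover (fun x => {g | y x g < m})
      (fun x hx => (hcont (y x) (hyC x hx) x hx).eventually (gt_mem_nhds (hy x hx)))
    refine ⟨t, htG, fun g hg => ?_⟩
    simpa using ht hg
  obtain ⟨y0, hy0, hlt⟩ := Sion.exists_lt_iInf_of_lt_iInf_of_finite (X := G) (Y := C)
    (f := fun g y => - y g) neG kG
    (fun y hy => (hcont y hy).neg.lowerSemicontinuousOn)
    (fun y hy => (hconc y hy).neg.quasiconvexOn) cC
    (fun g hg => ((continuous_apply g).neg.upperSemicontinuous).upperSemicontinuousOn _)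
    (fun g hg => by
      refine ConcaveOn.quasiconcaveOn ⟨cC, fun a _ b _ s t _ _ _ => ?_⟩
      simp)
    cG (s := y '' t) (t.finite_toSet.image y) (by rintro _ ⟨x, hx, rfl⟩; exact hyC x (htG x hx))
    (t := -m) (fun g hg => by
      obtain ⟨x, hx, hxm⟩ := ht g hg
      exact ⟨y x, ⟨x, hx, rfl⟩, by linarith⟩)
  obtain ⟨g, hg, hm⟩ := h y0 hy0
  have := hlt g hg
  linarith

theorem convex_payoffL (L : ℕ) : Convex ℝ {g : K → ℕ → ℕ → ℝ | IsPayoffL L g} := by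
  intro g hg g' hg' a b ha hb hab
  refine ⟨fun k i j => ?_, fun k i j h => ?_, fun k i j h h' => ?_⟩
  · exact (convex_Icc (-1 : ℝ) 1) (hg.1 k i j) (hg'.1 k i j) ha hb hab
  · simp [hg.2.1 k i j h, hg'.2.1 k i j h]; linarith
  · simp [hg.2.2 k i j h h', hg'.2.2 k i j h h']; linarith

theorem compact_payoffL (L : ℕ) : IsCompact {g : K → ℕ → ℕ → ℝ | IsPayoffL L g} := by
  have h1 : IsCompact (Set.univ.pi fun _ : K => Set.univ.pi fun _ : ℕ => Set.univ.pi
      fun _ : ℕ => Set.Icc (-1 : ℝ) 1) :=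
    isCompact_univ_pi fun _ => isCompact_univ_pi fun _ => isCompact_univ_pi fun _ => isCompact_Icc
  refine h1.of_isClosed_subset ?_ (fun g hg => ?_)
  · have c : ∀ k i j, Continuous fun g : K → ℕ → ℕ → ℝ => g k i j := fun k i j => by fun_prop
    unfold IsPayoffL
    simp only [Set.ofPred_and, Set.ofPred_forall]
    refine IsClosed.inter ?_ (IsClosed.inter ?_ ?_)
    · exact isClosed_iInter fun k => isClosed_iInter fun i => isClosed_iInter fun j =>
        isClosed_Icc.preimage (c k i j)
    · exact isClosed_iInter fun k => isClosed_iInter fun i => isClosed_iInter fun j =>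
        isClosed_iInter fun _ => isClosed_eq (c k i j) continuous_const
    · exact isClosed_iInter fun k => isClosed_iInter fun i => isClosed_iInter fun j =>
        isClosed_iInter fun _ => isClosed_iInter fun _ => isClosed_eq (c k i j) continuous_const
  · simp only [Set.mem_pi]
    exact fun k _ i _ j _ => hg.1 k i j

/-- mixture -/
theorem exists_mix (q q' : Garbling) {a b : ℝ} (ha : 0 ≤ a) (hb : 0 ≤ b) (hab : a + b = 1) :
    ∃ r : Garbling, ∀ n (F : ℕ → ℝ), (∀ i, |F i| ≤ 1) →
      ex (r n) F = a * ex (q n) F + b * ex (q' n) F := by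
  have hs : ∑ x : Bool, (cond x (ENNReal.ofReal a) (ENNReal.ofReal b)) = 1 := by
    simp [← ENNReal.ofReal_add ha hb, hab]
  refine ⟨fun n => (PMF.ofFintype _ hs).bind (fun x => cond x (q n) (q' n)), fun n F hF => ?_⟩
  rw [ex_bind _ _ hF]
  conv_lhs => unfold ex
  simp [tsum_fintype, ha, hb, ex]

theorem ex_lin3 (p : InfoStruct K) {f g : K → ℕ → ℕ → ℝ} (hf : ∀ k i j, |f k i j| ≤ 1)
    (hg : ∀ k i j, |g k i j| ≤ 1) (a b : ℝ) :
    ex p (fun x => (a • f + b • g) x.1 x.2.1 x.2.2)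
      = a * ex p (fun x => f x.1 x.2.1 x.2.2) + b * ex p (fun x => g x.1 x.2.1 x.2.2) := by
  rw [← ex_lin p a b (B := 1) (B' := 1) (fun x => hf _ _ _) (fun x => hg _ _ _)]
  rfl

/-- clipping to make functional well-behaved everywhere -/
noncomputable def clip (g : K → ℕ → ℕ → ℝ) : K × ℕ × ℕ → ℝ :=
  fun x => max (-1) (min 1 (g x.1 x.2.1 x.2.2))

theorem clip_abs (g : K → ℕ → ℕ → ℝ) (x) : |clip g x| ≤ 1 := by
  unfold clip
  rw [_root_.abs_le]
  exact ⟨le_max_left _ _, max_le (by norm_num) (min_le_left _ _)⟩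

theorem clip_eq {g : K → ℕ → ℕ → ℝ} (hg : ∀ k i j, |g k i j| ≤ 1) :
    clip g = fun x => g x.1 x.2.1 x.2.2 := by
  funext x
  have := _root_.abs_le.1 (hg x.1 x.2.1 x.2.2)
  unfold clip
  rw [min_eq_right this.2, max_eq_right this.1]

/-- pairing functional -/
noncomputable def pair (u v : InfoStruct K) (q q' : Garbling) (g : K → ℕ → ℕ → ℝ) : ℝ :=
  ex (garbleRight v q') (clip g) - ex (garbleLeft q u) (clip g)

theorem convex_pair (u v : InfoStruct K) :
    Convex ℝ {y : (K → ℕ → ℕ → ℝ) → ℝ | ∃ q q', y = pair u v q q'} := by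
  rintro _ ⟨q, q', rfl⟩ _ ⟨r, r', rfl⟩ a b ha hb hab
  obtain ⟨s, hs⟩ := exists_mix q r ha hb hab
  obtain ⟨s', hs'⟩ := exists_mix q' r' ha hb hab
  refine ⟨s, s', ?_⟩
  funext g
  have hc := clip_abs g
  simp only [pair, Pi.add_apply, Pi.smul_apply, smul_eq_mul, ex_garbleLeft _ _ hc,
    ex_garbleRight _ _ hc]
  simp only [hs _ _ (fun _ => hc _), hs' _ _ (fun _ => hc _)]
  rw [ex_lin _ a b (B := 1) (B' := 1) (fun x => ex_abs_le _ fun _ => hc _)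
      (fun x => ex_abs_le _ fun _ => hc _),
    ex_lin _ a b (B := 1) (B' := 1) (fun x => ex_abs_le _ fun _ => hc _)
      (fun x => ex_abs_le _ fun _ => hc _)]
  ring

theorem continuous_ex_clip (p : InfoStruct K) : Continuous (fun g => ex p (clip g)) := by
  unfold ex
  refine continuous_tsum (u := fun x => (p x).toReal) (fun x => ?_) (pmf_summable p) (fun x g => ?_)
  · unfold clip; fun_prop
  · rw [Real.norm_eq_abs, abs_mul, abs_of_nonneg ENNReal.toReal_nonneg]
    exact mul_le_of_le_one_right ENNReal.toReal_nonneg (clip_abs g x)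

theorem concave_pair (u v : InfoStruct K) (q q' : Garbling) (L : ℕ) :
    ConcaveOn ℝ {g : K → ℕ → ℕ → ℝ | IsPayoffL L g} (pair u v q q') := by
  refine ⟨convex_payoffL L, fun f hf g hg a b ha hb hab => le_of_eq ?_⟩
  have h := convex_payoffL L hf hg ha hb hab
  unfold pair
  rw [clip_eq hf.abs_le, clip_eq hg.abs_le, clip_eq (IsPayoffL.abs_le h),
    ex_lin3 _ hf.abs_le hg.abs_le, ex_lin3 _ hf.abs_le hg.abs_le]
  simp only [smul_eq_mul]; ring

theorem tail_tendsto {α : Type} (p : PMF α) (f : α → ℕ) :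
    Filter.Tendsto (fun L => ex p (fun x => if L ≤ f x then (1 : ℝ) else 0)) Filter.atTop
      (nhds 0) := by
  have h : ∑' a, (p a).toReal * (0 : ℝ) = 0 := by simp
  unfold ex
  conv => rhs; rw [← h]
  refine tendsto_tsum_of_dominated_convergence (bound := fun x => (p x).toReal) (pmf_summable p)
    (fun x => ?_) (Filter.Eventually.of_forall fun L x => ?_)
  · refine tendsto_const_nhds.congr' ?_
    filter_upwards [Filter.eventually_gt_atTop (f x)] with L hL
    simp [not_le.2 hL]
  · dsimp only
    split_ifs <;> simp

theorem exists_sign (u v : InfoStruct K) (q q' : Garbling) (L : ℕ) :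
    ∃ g : K → ℕ → ℕ → ℝ, IsPayoffL L g ∧
      tv (garbleLeft q u) (garbleRight v q')
        - 2 * ex v (fun x => if L ≤ x.2.1 then (1 : ℝ) else 0)
        - 2 * ex u (fun x => if L ≤ x.2.2 then (1 : ℝ) else 0) ≤ pair u v q q' g := by
  set p := garbleRight v q' with hp
  set r := garbleLeft q u with hr
  let g : K → ℕ → ℕ → ℝ := fun k i j => if L ≤ i then -1 else if L ≤ j then 1 else
    if (r (k, i, j)).toReal ≤ (p (k, i, j)).toReal then 1 else -1
  have hg : IsPayoffL L g := by
    refine ⟨fun k i j => ?_, fun k i j h => ?_, fun k i j h h' => ?_⟩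
    · simp only [g]; split_ifs <;> norm_num
    · simp [g, h]
    · simp [g, h, h']
  refine ⟨g, hg, ?_⟩
  have b1 : ∀ x : K × ℕ × ℕ, |(if L ≤ x.2.1 then (1 : ℝ) else 0)| ≤ 1 := by
    intro x; split_ifs <;> norm_num
  have b2 : ∀ x : K × ℕ × ℕ, |(if L ≤ x.2.2 then (1 : ℝ) else 0)| ≤ 1 := by
    intro x; split_ifs <;> norm_num
  have hconst : ∀ (w : PMF ℕ) (c : ℝ), ex w (fun _ => c) = c := by
    intro w c; unfold ex; rw [tsum_mul_right, pmf_tsum, one_mul]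
  have e1 : ex v (fun x => if L ≤ x.2.1 then (1 : ℝ) else 0)
      = ex p (fun x => if L ≤ x.2.1 then (1 : ℝ) else 0) := by
    rw [hp, ex_garbleRight _ _ b1]
    congr 1; funext x; exact (hconst _ (if L ≤ x.2.1 then (1 : ℝ) else 0)).symm
  have e2 : ex u (fun x => if L ≤ x.2.2 then (1 : ℝ) else 0)
      = ex r (fun x => if L ≤ x.2.2 then (1 : ℝ) else 0) := by
    rw [hr, ex_garbleLeft _ _ b2]
    congr 1; funext x; exact (hconst _ (if L ≤ x.2.2 then (1 : ℝ) else 0)).symm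
  have hg3 : ∀ x : K × ℕ × ℕ, |g x.1 x.2.1 x.2.2| ≤ 1 := fun x => hg.abs_le _ _ _
  rw [e1, e2]
  unfold pair
  rw [clip_eq hg.abs_le, ← hp, ← hr]
  unfold ex tv
  have s1 := ex_summable p b1
  have s2 := ex_summable r b2
  rw [← tsum_mul_left, ← tsum_mul_left, ← (tv_summable r p).tsum_sub (s1.mul_left 2),
    ← ((tv_summable r p).sub (s1.mul_left 2)).tsum_sub (s2.mul_left 2),
    ← (ex_summable p hg3).tsum_sub (ex_summable r hg3)]
  refine Summable.tsum_le_tsum (fun x => ?_)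
    (((tv_summable r p).sub (s1.mul_left 2)).sub (s2.mul_left 2))
    ((ex_summable p hg3).sub (ex_summable r hg3))
  obtain ⟨k, i, j⟩ := x
  have hp0 : 0 ≤ (p (k, i, j)).toReal := ENNReal.toReal_nonneg
  have hr0 : 0 ≤ (r (k, i, j)).toReal := ENNReal.toReal_nonneg
  simp only [g]
  rcases abs_cases ((r (k, i, j)).toReal - (p (k, i, j)).toReal) with ⟨h, h'⟩ | ⟨h, h'⟩ <;>
    rw [h] <;> split_ifs <;> linarith

theorem tv_min_le (u v : InfoStruct K) (δ : ℝ)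
    (hmin : ∀ q q' : Garbling, δ ≤ tv (garbleLeft q u) (garbleRight v q')) :
    δ ≤ dVal u v := by
  have key : ∀ L : ℕ, δ - 2 * ex v (fun x => if L ≤ x.2.1 then (1 : ℝ) else 0)
        - 2 * ex u (fun x => if L ≤ x.2.2 then (1 : ℝ) else 0) ≤ dVal u v := by
    intro L
    set m := δ - 2 * ex v (fun x => if L ≤ x.2.1 then (1 : ℝ) else 0)
        - 2 * ex u (fun x => if L ≤ x.2.2 then (1 : ℝ) else 0) with hm
    obtain ⟨g, hg, hgm⟩ := minimax_aux (G := {g : K → ℕ → ℕ → ℝ | IsPayoffL L g})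
      (let ⟨g, hg, _⟩ := exists_sign u v PMF.pure PMF.pure L; ⟨g, hg⟩)
      (convex_payoffL L) (compact_payoffL L) (convex_pair u v)
      (by
        rintro _ ⟨q, q', rfl⟩
        exact ((continuous_ex_clip _).sub (continuous_ex_clip _)).continuousOn)
      (by rintro _ ⟨q, q', rfl⟩; exact concave_pair u v q q' L) m
      (by
        rintro _ ⟨q, q', rfl⟩
        obtain ⟨g, hg, h⟩ := exists_sign u v q q' L
        exact ⟨g, hg, by linarith [hmin q q']⟩)
    have hb := IsPayoffL.abs_le hg
    have hpay : ∀ q q', m + payoff u g q PMF.pure ≤ payoff v g PMF.pure q' := by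
      intro q q'
      have := hgm _ ⟨q, q', rfl⟩
      unfold pair at this
      rw [clip_eq hb, ← payoff_pure_left v hb, ← payoff_pure_right u hb] at this
      linarith
    have h1 : val u g ≤ val v g - m := by
      refine val_le u hb PMF.pure _ fun q => ?_
      have := val_ge v hb PMF.pure (m + payoff u g q PMF.pure) (hpay q)
      linarith
    have h2 := le_dVal u v (g := g) ⟨L, hg⟩
    have h3 := neg_abs_le (val u g - val v g)
    linarith
  have t1 := tail_tendsto v (fun x => x.2.1)
  have t2 := tail_tendsto u (fun x => x.2.2)
  have t := (((tendsto_const_nhds (x := δ)).sub (t1.const_mul 2)).sub (t2.const_mul 2))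
  simp only [mul_zero, sub_zero] at t
  exact le_of_tendsto' t key

/-- Garblings attaining the minimum of `‖q₁.u − v.q₂‖` transport optimal
strategies into `2d(u,v)`-optimal strategies: if `σ` is optimal for player 1
in `Γ(v,g)`, then `σ.q₁` is `2d(u,v)`-optimal for player 1 in `Γ(u,g)`;
if `τ` is optimal for player 2 in `Γ(u,g)`, then `τ.q₂` is `2d(u,v)`-optimal
for player 2 in `Γ(v,g)`. -/
theorem optimal_strategies_transport (K : Type) [Fintype K]
    (hK : 2 ≤ Fintype.card K) (u v : InfoStruct K) (q₁ q₂ : Garbling)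
    (hmin : ∀ q₁' q₂' : Garbling,
      tv (garbleLeft q₁ u) (garbleRight v q₂)
        ≤ tv (garbleLeft q₁' u) (garbleRight v q₂'))
    (g : K → ℕ → ℕ → ℝ) (hg : IsPayoff g) :
    (∀ σ : Garbling, (∀ τ : Garbling, val v g ≤ payoff v g σ τ) →
      ∀ τ : Garbling, val u g - 2 * dVal u v ≤ payoff u g (compGarble σ q₁) τ) ∧
    (∀ τ : Garbling, (∀ σ : Garbling, payoff u g σ τ ≤ val u g) →
      ∀ σ : Garbling, payoff v g σ (compGarble τ q₂) ≤ val v g + 2 * dVal u v) := by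
  have hδ := tv_min_le u v _ hmin
  have hb := hg.abs_le
  have hd := abs_le.1 (le_dVal u v hg)
  have habs : ∀ σ τ : Garbling, ∀ x : K × ℕ × ℕ, |ex (σ x.2.1) (fun i => ex (τ x.2.2)
      (fun j => g x.1 i j))| ≤ 1 :=
    fun σ τ x => ex_abs_le _ fun i => ex_abs_le _ fun j => hb _ _ _
  have hsw : ∀ σ τ : Garbling, payoff v g σ (compGarble τ q₂)
      ≤ payoff u g (compGarble σ q₁) τ + dVal u v := by
    intro σ τ
    have h := ex_sub_le_tv (garbleLeft q₁ u) (garbleRight v q₂) (F := fun x =>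
      -ex (σ x.2.1) (fun i => ex (τ x.2.2) (fun j => g x.1 i j)))
      (fun x => by rw [abs_neg]; exact habs σ τ x)
    have hn : ∀ (p : InfoStruct K) (F : K × ℕ × ℕ → ℝ), ex p (fun x => -F x) = -ex p F := by
      intro p F; simp [ex, tsum_neg]
    rw [hn, hn, ← payoff_eq, ← payoff_eq] at h
    rw [payoff_left u hb, payoff_right v hb]
    linarith
  refine ⟨fun σ hσ τ => ?_, fun τ hτ σ => ?_⟩
  · linarith [hsw σ τ, hσ (compGarble τ q₂)]
  · linarith [hsw σ τ, hτ (compGarble σ q₁)]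


end ValueDistance
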